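/- arXiv:1910.09500 — 2 statements merged into one kernel-verified Lean document; each statement's English description precedes it below -/
import Mathlib

section
/- Let λ : ℤ₊ → ℝ satisfy (UB) and let N ≥ 1. For all t ≥ 0 and all (y,x) ∈ W^{N,N+1}, the series Σ_{(y',x') ∈ W^{N,N+1}} U_t^{N,N+1}[(y,x),(y',x')] converges and its value is at most 1. -/
open Complex MeasureTheory Finset
open scoped Real ComplexOrder

/-- ψ_x(w) = ∏_{k=0}^{x} λ(k)/(λ(k)−w). -/
noncomputable def psiF (lam : ℕ → ℝ) (x : ℕ) (w : ℂ) : ℂ :=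
  ∏ k ∈ Finset.range (x + 1), (lam k : ℂ) / ((lam k : ℂ) - w)

/-- p_x(w) = ∏_{k=0}^{x−1} (λ(k)−w)/λ(k). -/
noncomputable def pF (lam : ℕ → ℝ) (x : ℕ) (w : ℂ) : ℂ :=
  ∏ k ∈ Finset.range x, (((lam k : ℂ) - w) / (lam k : ℂ))

/-- e^{tL}(x,y) := −(1/λ(y))·(1/(2πi)) ∮_{|w|=R} ψ_y(w) p_x(w) e^{−tw} dw,
the contour being the counterclockwise circle of radius R centred at 0. -/
noncomputable def eL (lam : ℕ → ℝ) (R t : ℝ) (x y : ℕ) : ℂ :=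
  -(1 / (lam y : ℂ)) * ((2 * (Real.pi : ℂ) * Complex.I)⁻¹ *
    ∮ w in C(0, R), psiF lam y w * pF lam x w * Complex.exp (-(t : ℂ) * w))

/-- y ≺ x : interlacing, x_1 ≤ y_1 < x_2 ≤ y_2 < ⋯ ≤ y_N < x_{N+1}.
(Membership of (y,x) in W^{N,N+1} is exactly this condition.) -/
def Interlace {N : ℕ} (y : Fin N → ℕ) (x : Fin (N + 1) → ℕ) : Prop :=
  ∀ i : Fin N, x i.castSucc ≤ y i ∧ y i < x i.succ

instance {N : ℕ} (y : Fin N → ℕ) (x : Fin (N + 1) → ℕ) : Decidable (Interlace y x) :=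
  inferInstanceAs (Decidable (∀ i : Fin N, x i.castSucc ≤ y i ∧ y i < x i.succ))

/-- The two-level Karlin–McGregor block determinant kernel
U_t^{N,N+1}[(y,x),(y',x')] = det [[A, B],[C, D]] with
A_{ij} = e^{tL}(x_i,x'_j), B_{ij} = λ(y'_j)⁻¹ (Σ_{z=0}^{y'_j} e^{tL}(x_i,z) − 1(j ≥ i)),
C_{ij} = λ(y_i)(e^{tL}(y_i,x'_j) − e^{tL}(y_i+1,x'_j)), D_{ij} = e^{tL}(y_i,y'_j). -/
noncomputable def Ut (lam : ℕ → ℝ) (R t : ℝ) (N : ℕ)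
    (y : Fin N → ℕ) (x : Fin (N + 1) → ℕ)
    (y' : Fin N → ℕ) (x' : Fin (N + 1) → ℕ) : ℂ :=
  (Matrix.fromBlocks
    (Matrix.of fun i j => eL lam R t (x i) (x' j))
    (Matrix.of fun (i : Fin (N + 1)) (j : Fin N) =>
      (1 / (lam (y' j) : ℂ)) *
        ((∑ z ∈ Finset.range (y' j + 1), eL lam R t (x i) z)
          - if (i : ℕ) ≤ (j : ℕ) then 1 else 0))
    (Matrix.of fun (i : Fin N) (j : Fin (N + 1)) =>
      (lam (y i) : ℂ) * (eL lam R t (y i) (x' j) - eL lam R t (y i + 1) (x' j)))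
    (Matrix.of fun i j => eL lam R t (y i) (y' j))).det

/-!
The entries of `e^{tL}` are differences of the tails of a pure birth chain, written as circle
averages. The backward equation and a downward induction on the starting point show that `e^{tL}`
is nonnegative, and telescoping the tails shows that its rows sum to `1`.

For a fixed lower level `y'`, interlacing confines each `x'_j` to an interval of its own, so the
sum of the determinant over `x'` is taken row by row. The interval sums telescope, and row
operations collapse the resulting determinant to the Karlin–McGregor determinant
`det e^{tL}(y_i, y'_j)`. Expanding such minors over permutations visits every function of `i` at
most once, so over increasing `y'` they sum to at most a product of row sums.

The double series converges absolutely because enlarging the contour makes the tails decay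
geometrically, at any rate.
-/

open Filter Topology

section Telescoping

variable {G : Type*} [AddCommGroup G] [TopologicalSpace G] [IsTopologicalAddGroup G] {f : ℕ → G}

theorem hasSum_sub_succ (hf : Summable f) : HasSum (fun n => f n - f (n + 1)) (f 0) := by
  simpa using hf.hasSum.sub ((hasSum_nat_add_iff' 1).2 hf.hasSum)

theorem hasSum_indicator_Ioi_sub_succ (hf : Summable f) (m : ℕ) :
    HasSum ((Set.Ioi m).indicator fun n => f n - f (n + 1)) (f (m + 1)) := by
  have hshift := hasSum_sub_succ ((summable_nat_add_iff (m + 1)).2 hf)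
  rw [← hasSum_nat_add_iff' (m + 1), sum_eq_zero fun n hn => ?_, sub_zero]
  · convert hshift using 2 with n
    · rw [Set.indicator_of_mem (by simp; omega), add_right_comm]
    · rw [zero_add]
  · exact Set.indicator_of_notMem (by simpa [Nat.lt_succ_iff] using hn) _

theorem summable_norm_indicator_sub_succ {G : Type*} [SeminormedAddCommGroup G] {f : ℕ → G}
    (hf : Summable fun n => ‖f n‖) (s : Set ℕ) :
    Summable fun n => ‖s.indicator (fun n => f n - f (n + 1)) n‖ :=
  .of_nonneg_of_le (fun _ => norm_nonneg _)
    (fun _ => (norm_indicator_le_norm_self _ _).trans (norm_sub_le _ _))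
    (hf.add ((summable_nat_add_iff 1).2 hf))

theorem mul_norm_sub_succ_le_of_mul_norm_le_pow {G : Type*} [SeminormedAddCommGroup G] {f : ℕ → G}
    {c K q : ℝ} {n : ℕ} (hc : 0 ≤ c) (hq : q ≤ 1) (hf : ∀ m, n ≤ m → c * ‖f m‖ ≤ K * q ^ m)
    {m : ℕ} (hm : n ≤ m) : c * ‖f m - f (m + 1)‖ ≤ 2 * K * q ^ m := by
  have hpow : K * q ^ m * q ≤ K * q ^ m :=
    mul_le_of_le_one_right ((mul_nonneg hc (norm_nonneg _)).trans (hf m hm)) hq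
  calc c * ‖f m - f (m + 1)‖ ≤ c * ‖f m‖ + c * ‖f (m + 1)‖ := by
        rw [← mul_add]
        exact mul_le_mul_of_nonneg_left (norm_sub_le _ _) hc
    _ ≤ K * q ^ m + K * q ^ (m + 1) := add_le_add (hf m hm) (hf _ (hm.trans m.le_succ))
    _ ≤ 2 * K * q ^ m := by
      rw [pow_succ]
      linarith

theorem summable_norm_of_le_geometric {G : Type*} [SeminormedAddCommGroup G] {f : ℕ → G} {K q : ℝ}
    (hq₀ : 0 ≤ q) (hq₁ : q < 1) (hf : ∀ m, ‖f m‖ ≤ K * q ^ m) : Summable fun m => ‖f m‖ :=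
  .of_nonneg_of_le (fun _ => norm_nonneg _) hf
    ((summable_geometric_of_lt_one hq₀ hq₁).mul_left K)

end Telescoping

section Products

variable {ι : Type*} [Fintype ι] {α : ι → Type*}

theorem sum_prod_le_prod {S : Type*} [CommSemiring S] [PartialOrder S] [IsOrderedRing S]
    {f : ∀ i, α i → S} {c : ι → S} (hf : ∀ i a, 0 ≤ f i a)
    (hc : ∀ i (A : Finset (α i)), ∑ a ∈ A, f i a ≤ c i) (A : Finset (∀ i, α i)) :
    ∑ a ∈ A, ∏ i, f i (a i) ≤ ∏ i, c i := by
  classical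
  have hA : A ⊆ Fintype.piFinset fun i => A.image fun a => a i := fun a ha =>
    Fintype.mem_piFinset.2 fun i => Finset.mem_image_of_mem (fun a => a i) ha
  calc ∑ a ∈ A, ∏ i, f i (a i)
      ≤ ∑ a ∈ Fintype.piFinset fun i => A.image fun a => a i, ∏ i, f i (a i) :=
        Finset.sum_le_sum_of_subset_of_nonneg hA fun a _ _ => Finset.prod_nonneg fun i _ => hf i _
    _ = ∏ i, ∑ z ∈ A.image fun a => a i, f i z := (Finset.prod_univ_sum _ _).symm
    _ ≤ ∏ i, c i := Finset.prod_le_prod (fun i _ => Finset.sum_nonneg fun z _ => hf i z)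
        fun i _ => hc i _

theorem summable_prod_pi {f : ∀ i, α i → ℝ} (hf : ∀ i a, 0 ≤ f i a)
    (hs : ∀ i, Summable (f i)) : Summable fun a : ∀ i, α i => ∏ i, f i (a i) :=
  summable_of_sum_le (fun _ => Finset.prod_nonneg fun i _ => hf i _) <|
    sum_prod_le_prod hf fun i A => (hs i).sum_le_tsum A fun a _ => hf i a

theorem tendsto_piFinset_atTop [DecidableEq ι] :
    Tendsto (fun A : ∀ i, Finset (α i) => Fintype.piFinset A) atTop atTop := by
  classical
  refine tendsto_atTop_finset_of_monotone (fun A B h => Fintype.piFinset_subset A B h) fun a =>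
    ⟨fun i => {a i}, ?_⟩
  simp

end Products

section MultilinearSeries

variable {ι : Type*} [Finite ι] {α : ι → Type*}

theorem hasSum_continuousMultilinearMap_apply {𝕜 G : Type*} {E : ι → Type*}
    [NontriviallyNormedField 𝕜] [∀ i, NormedAddCommGroup (E i)] [∀ i, NormedSpace 𝕜 (E i)]
    [NormedAddCommGroup G] [NormedSpace 𝕜 G] [CompleteSpace G]
    (f : ContinuousMultilinearMap 𝕜 E G) {v : ∀ i, α i → E i} {s : ∀ i, E i}
    (hv : ∀ i, Summable fun a => ‖v i a‖) (hs : ∀ i, HasSum (v i) (s i)) :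
    HasSum (fun a : ∀ i, α i => f fun i => v i (a i)) (f s) := by
  classical
  have := Fintype.ofFinite ι
  have hsum : Summable fun a : ∀ i, α i => f fun i => v i (a i) :=
    .of_norm_bounded ((summable_prod_pi (fun _ _ => norm_nonneg _) hv).mul_left ‖f‖)
      fun a => f.le_opNorm _
  have hbox : Tendsto (fun A : ∀ i, Finset (α i) => f fun i => ∑ a ∈ A i, v i a) atTop
      (𝓝 (f s)) :=
    (f.cont.tendsto s).comp <| tendsto_pi_nhds.2 fun i => (hs i).comp <|
      tendsto_atTop_atTop_of_monotone (Function.monotone_eval i) fun A =>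
        ⟨Function.update ⊥ i A, by simp⟩
  have heq := tendsto_nhds_unique (hsum.hasSum.comp tendsto_piFinset_atTop)
    (hbox.congr fun A => f.toMultilinearMap.map_sum_finset v A)
  exact heq ▸ hsum.hasSum

theorem hasSum_continuousMultilinearMap_apply_sumElim {𝕜 κ E G : Type*} [Finite κ]
    [NontriviallyNormedField 𝕜] [NormedAddCommGroup E] [NormedSpace 𝕜 E]
    [NormedAddCommGroup G] [NormedSpace 𝕜 G] [CompleteSpace G]
    (f : ContinuousMultilinearMap 𝕜 (fun _ : ι ⊕ κ => E) G) {v : ∀ i, α i → E} {s : ι → E}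
    (hv : ∀ i, Summable fun a => ‖v i a‖) (hs : ∀ i, HasSum (v i) (s i)) (u : κ → E) :
    HasSum (fun a : ∀ i, α i => f (Sum.elim (fun i => v i (a i)) u)) (f (Sum.elim s u)) := by
  have := Fintype.ofFinite ι
  have := Fintype.ofFinite κ
  have hcurry := hasSum_continuousMultilinearMap_apply f.currySum hv hs
  exact hcurry.mapL (ContinuousMultilinearMap.apply 𝕜 (fun _ : κ => E) G u)

end MultilinearSeries

section Determinants

theorem injOn_comp_perm_of_strictMono {n α : Type*} [LinearOrder n] [WellFoundedLT n]
    [LinearOrder α] :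
    Set.InjOn (fun p : (n → α) × Equiv.Perm n => p.1 ∘ p.2) {p | StrictMono p.1} := by
  rintro ⟨y, σ⟩ hy ⟨y', τ⟩ hy' (h : y ∘ σ = y' ∘ τ)
  obtain rfl : y = y' := (StrictMono.range_inj hy hy').1 <| by
    rw [← σ.surjective.range_comp y, h, τ.surjective.range_comp y']
  exact Prod.ext rfl (Equiv.ext fun i => hy.injective (congrFun h i))

variable {n α : Type*} [Fintype n] [DecidableEq n]

theorem det_le_sum_perm_of_nonneg {S : Type*} [CommRing S] [PartialOrder S] [IsOrderedRing S]
    {A : Matrix n n S} (hA : ∀ i j, 0 ≤ A i j) :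
    A.det ≤ ∑ σ : Equiv.Perm n, ∏ i, A i (σ i) := by
  rw [← Matrix.det_transpose, Matrix.det_apply]
  refine Finset.sum_le_sum fun σ _ => ?_
  have hprod : 0 ≤ ∏ i, A i (σ i) := Finset.prod_nonneg fun i _ => hA i _
  rcases Int.units_eq_one_or (Equiv.Perm.sign σ) with hσ | hσ
  · simp [hσ]
  · simpa [hσ] using (neg_nonpos.2 hprod).trans hprod

-- Expanding each minor over permutations visits every function `n → α` at most once.
theorem sum_det_submatrix_le_prod [LinearOrder n] [LinearOrder α]
    {S : Type*} [CommRing S] [PartialOrder S] [IsOrderedRing S]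
    {P : Matrix n α S} {c : n → S} (hP : ∀ i a, 0 ≤ P i a)
    (hc : ∀ i (A : Finset α), ∑ a ∈ A, P i a ≤ c i) {A : Finset (n → α)}
    (hA : ∀ y ∈ A, StrictMono y) :
    ∑ y ∈ A, (P.submatrix id y).det ≤ ∏ i, c i := by
  have hinj : Set.InjOn (fun p : (n → α) × Equiv.Perm n => p.1 ∘ p.2)
      (A ×ˢ (Finset.univ : Finset (Equiv.Perm n)) : Finset _) :=
    injOn_comp_perm_of_strictMono.mono fun p hp => hA p.1 (Finset.mem_product.1 hp).1
  calc ∑ y ∈ A, (P.submatrix id y).det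
      ≤ ∑ y ∈ A, ∑ σ : Equiv.Perm n, ∏ i, P i (y (σ i)) :=
        Finset.sum_le_sum fun y _ => det_le_sum_perm_of_nonneg fun i j => hP i (y j)
    _ = ∑ z ∈ (A ×ˢ Finset.univ).image fun p : (n → α) × Equiv.Perm n => p.1 ∘ p.2,
          ∏ i, P i (z i) := by
        rw [Finset.sum_image hinj, Finset.sum_product]
        rfl
    _ ≤ ∏ i, c i := sum_prod_le_prod hP hc _

variable (𝕜 : Type*) [NontriviallyNormedField 𝕜]

/-- The determinant as a continuous multilinear function of the rows. -/
def detContinuousMultilinear (n : Type*) [Fintype n] [DecidableEq n] :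
    ContinuousMultilinearMap 𝕜 (fun _ : n => n → 𝕜) 𝕜 where
  toMultilinearMap := Matrix.detRowAlternating.toMultilinearMap
  cont := continuous_id.matrix_det

end Determinants

section CircleAverage

variable {c : ℂ} {R : ℝ}

theorem norm_circleAverage_le_of_norm_le {E : Type*} [NormedAddCommGroup E] [NormedSpace ℝ E]
    {f : ℂ → E} {C : ℝ} (hf : ∀ w ∈ Metric.sphere c |R|, ‖f w‖ ≤ C) :
    ‖Real.circleAverage f c R‖ ≤ C := by
  have hbound := intervalIntegral.norm_integral_le_of_norm_le_const (a := 0) (b := 2 * π)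
    fun θ _ => hf _ (circleMap_mem_sphere' c R θ)
  rw [sub_zero, abs_of_pos Real.two_pi_pos] at hbound
  rw [Real.circleAverage_def, norm_smul, norm_inv, Real.norm_of_nonneg Real.two_pi_pos.le,
    inv_mul_le_iff₀ Real.two_pi_pos]
  exact hbound.trans_eq (mul_comm _ _)

theorem circleAverage_eq_of_differentiableOn_exterior {E : Type*} [NormedAddCommGroup E]
    [NormedSpace ℂ E] {f : ℂ → E} {ρ R' : ℝ} (hρ : 0 ≤ ρ)
    (hf : DifferentiableOn ℂ f {w | ρ < ‖w - c‖}) (hR : ρ < R) (hR' : ρ < R') :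
    Real.circleAverage f c R = Real.circleAverage f c R' := by
  wlog hle : R ≤ R' generalizing R R'
  · exact (this hR' hR (le_of_not_ge hle)).symm
  have hopen : IsOpen {w : ℂ | ρ < ‖w - c‖} := isOpen_lt (by fun_prop) (by fun_prop)
  rw [Real.circleAverage_eq_circleIntegral (hρ.trans_lt hR).ne',
    Real.circleAverage_eq_circleIntegral (hρ.trans_lt hR').ne',
    Complex.circleIntegral_sub_center_inv_smul_eq_of_differentiable_on_annulus_off_countable
      (hρ.trans_lt hR) hle Set.countable_empty (hf.continuousOn.mono fun w hw => ?_)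
      fun w hw => ?_]
  · have : R ≤ ‖w - c‖ := by simpa [dist_eq_norm] using hw.2
    exact hR.trans_le this
  · have : R < ‖w - c‖ := by simpa [dist_eq_norm] using hw.1.2
    exact hf.differentiableAt (hopen.mem_nhds (hR.trans this))

theorem hasDerivAt_circleAverage {E : Type*} [NormedAddCommGroup E] [NormedSpace ℝ E]
    {F F' : ℝ → ℂ → E} (hF : ∀ t, ContinuousOn (F t) (Metric.sphere c |R|))
    (hF' : ContinuousOn (Function.uncurry F') (Set.univ ×ˢ Metric.sphere c |R|))
    (hderiv : ∀ t, ∀ w ∈ Metric.sphere c |R|, HasDerivAt (fun t => F t w) (F' t w) t) (t : ℝ) :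
    HasDerivAt (fun t => Real.circleAverage (F t) c R) (Real.circleAverage (F' t) c R) t := by
  have hmem := circleMap_mem_sphere' c R
  have hcont : ∀ s, Continuous fun θ => F s (circleMap c R θ) := fun s =>
    (hF s).comp_continuous (continuous_circleMap c R) hmem
  have hcont' : Continuous fun θ => F' t (circleMap c R θ) :=
    hF'.comp_continuous (f := fun θ => (t, circleMap c R θ)) (by fun_prop)
      fun θ => ⟨Set.mem_univ _, hmem θ⟩
  obtain ⟨C, hC⟩ := ((isCompact_closedBall t 1).prod
    (isCompact_sphere c |R|)).exists_bound_of_continuousOn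
      (hF'.mono (Set.prod_mono_left (Set.subset_univ _)))
  simp only [Real.circleAverage_def]
  refine HasDerivAt.const_smul _ (intervalIntegral.hasDerivAt_integral_of_dominated_loc_of_deriv_le
    (bound := fun _ => C) (Metric.ball_mem_nhds t one_pos)
    (.of_forall fun s => (hcont s).aestronglyMeasurable)
    ((hcont t).intervalIntegrable _ _) hcont'.aestronglyMeasurable
    (.of_forall fun θ _ s hs => ?_) intervalIntegrable_const
    (.of_forall fun θ _ s _ => hderiv s _ (hmem θ))).2
  exact hC (s, circleMap c R θ) ⟨Metric.ball_subset_closedBall hs, hmem θ⟩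

end CircleAverage

theorem monotoneOn_of_hasDerivAt_nonneg {D : Set ℝ} (hD : Convex ℝ D) {g g' : ℝ → ℂ}
    (hg : ∀ t ∈ D, HasDerivAt g (g' t) t) (hg' : ∀ t ∈ D, 0 ≤ g' t) : MonotoneOn g D := by
  have hre : ∀ t ∈ D, HasDerivAt (fun t => (g t).re) (g' t).re t := fun t ht =>
    Complex.reCLM.hasFDerivAt.comp_hasDerivAt t (hg t ht)
  have him : ∀ t ∈ D, HasDerivAt (fun t => (g t).im) 0 t := fun t ht =>
    HasDerivAt.congr_deriv (f' := (g' t).im) (Complex.imCLM.hasFDerivAt.comp_hasDerivAt t (hg t ht))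
      (Complex.nonneg_iff.1 (hg' t ht)).2.symm
  have hmono : MonotoneOn (fun t => (g t).re) D := monotoneOn_of_hasDerivWithinAt_nonneg hD
    (fun t ht => (hre t ht).continuousAt.continuousWithinAt)
    (fun t ht => (hre t (interior_subset ht)).hasDerivWithinAt)
    fun t ht => (Complex.nonneg_iff.1 (hg' t (interior_subset ht))).1
  intro s hs t ht hst
  refine Complex.le_def.2 ⟨hmono hs ht hst, ?_⟩
  exact sub_eq_zero.1 <| norm_le_zero_iff.1 <| by
    simpa using hD.norm_image_sub_le_of_norm_hasDerivWithin_le (C := 0)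
      (fun t ht => (him t ht).hasDerivWithinAt) (by simp) ht hs

theorem nonneg_of_hasDerivAt_mul_sub {f b : ℝ → ℂ} {r : ℝ} (hr : 0 ≤ r)
    (hf : ∀ t, 0 ≤ t → HasDerivAt f (r * (b t - f t)) t) (hb : ∀ t, 0 ≤ t → 0 ≤ b t)
    (hf0 : 0 ≤ f 0) {t : ℝ} (ht : 0 ≤ t) : 0 ≤ f t := by
  -- `exp (r t)` is the integrating factor of `f' = r (b - f)`.
  have hd : ∀ t, 0 ≤ t → HasDerivAt (fun t => (Real.exp (r * t) : ℂ) * f t)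
      ((Real.exp (r * t) * r : ℝ) * b t) t := fun t ht => by
    refine ((((hasDerivAt_id t).const_mul r).exp.ofReal_comp).mul (hf t ht)).congr_deriv ?_
    push_cast [id]
    ring
  have hmono := monotoneOn_of_hasDerivAt_nonneg (convex_Ici 0) hd (fun t ht =>
    mul_nonneg (Complex.zero_le_real.2 (by positivity)) (hb t ht)) Set.self_mem_Ici ht ht
  simp only [mul_zero, Real.exp_zero, Complex.ofReal_one, one_mul] at hmono
  have hexp : (0 : ℂ) ≤ Real.exp (-(r * t)) := Complex.zero_le_real.2 (Real.exp_pos _).le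
  have := mul_nonneg hexp (hf0.trans hmono)
  rwa [← mul_assoc, ← Complex.ofReal_mul, ← Real.exp_add, neg_add_cancel, Real.exp_zero,
    Complex.ofReal_one, one_mul] at this

theorem prod_range_mul_prod_range_of_mul_eq_one {S : Type*} [CommMonoid S] {u v : ℕ → S}
    (h : ∀ k, u k * v k = 1) {m n : ℕ} (hmn : m ≤ n) :
    (∏ k ∈ range m, u k) * ∏ k ∈ range n, v k = ∏ k ∈ Ico m n, v k := by
  rw [← prod_range_mul_prod_Ico _ hmn, ← mul_assoc, ← prod_mul_distrib,
    prod_eq_one fun k _ => h k, one_mul]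

theorem le_norm_of_mem_sphere_abs {w : ℂ} {R : ℝ} (hw : w ∈ Metric.sphere 0 |R|) : R ≤ ‖w‖ :=
  (le_abs_self R).trans_eq (mem_sphere_zero_iff_norm.1 hw).symm

/-- The integrand of `birthTail`. -/
noncomputable def birthTailIntegrand (lam : ℕ → ℝ) (t : ℝ) (x m : ℕ) (w : ℂ) : ℂ :=
  (∏ k ∈ range m, (lam k : ℂ) / (lam k - w)) * pF lam x w * Complex.exp (-(t : ℂ) * w)

/-- The probability that the pure birth chain with rates `lam`, started from `x`, has reached
height `m` by time `t`, written as a contour integral. The circle average absorbs the factor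
`dw / (2πi w)`. -/
noncomputable def birthTail (lam : ℕ → ℝ) (R t : ℝ) (x m : ℕ) : ℂ :=
  Real.circleAverage (birthTailIntegrand lam t x m) 0 R

section BirthChain

variable {lam : ℕ → ℝ} {M : ℝ} (h0 : ∀ k, 0 < lam k) (hub : ∀ k, lam k ≤ M)

include h0 in
theorem rate_ne_zero (k : ℕ) : (lam k : ℂ) ≠ 0 :=
  Complex.ofReal_ne_zero.2 (h0 k).ne'

include h0 hub

theorem rate_sub_ne_zero {w : ℂ} (hw : M < ‖w‖) (k : ℕ) : (lam k : ℂ) - w ≠ 0 := by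
  rintro h
  rw [← sub_eq_zero.1 h, Complex.norm_real, Real.norm_of_nonneg (h0 k).le] at hw
  exact hw.not_ge (hub k)

theorem differentiableOn_birthTailIntegrand (t : ℝ) (x m : ℕ) :
    DifferentiableOn ℂ (birthTailIntegrand lam t x m) {w | M < ‖w - 0‖} := by
  intro w hw
  rw [Set.mem_ofPred_eq, sub_zero] at hw
  have hprod : DifferentiableAt ℂ (fun w : ℂ => ∏ k ∈ range m, (lam k : ℂ) / (lam k - w)) w :=
    DifferentiableAt.fun_finsetProd fun k _ =>
      (differentiableAt_const _).div (by fun_prop) (rate_sub_ne_zero h0 hub hw k)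
  have hpF : Differentiable ℂ (pF lam x) := by
    unfold pF
    fun_prop
  exact ((hprod.mul (hpF w)).mul (by fun_prop)).differentiableWithinAt

theorem norm_prod_rate_div_le {r : ℝ} (hr : 0 < r) {w : ℂ} (hw : M + r ≤ ‖w‖) (A : Finset ℕ) :
    ‖∏ k ∈ A, (lam k : ℂ) / (lam k - w)‖ ≤ ∏ k ∈ A, lam k / r := by
  rw [norm_prod]
  refine prod_le_prod (fun _ _ => norm_nonneg _) fun k _ => ?_
  have hk : ‖(lam k : ℂ)‖ = lam k := by rw [Complex.norm_real, Real.norm_of_nonneg (h0 k).le]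
  rw [norm_div, hk]
  refine div_le_div_of_nonneg_left (h0 k).le hr ?_
  calc r ≤ ‖w‖ - lam k := by linarith [hub k]
    _ ≤ ‖(lam k : ℂ) - w‖ := by simpa only [hk, norm_sub_rev w] using norm_sub_norm_le w (lam k)

theorem prod_rate_div_le_pow_card {c : ℝ} (hc : 0 < c) (A : Finset ℕ) :
    ∏ k ∈ A, lam k / (c * M) ≤ (1 / c) ^ #A := by
  have hM := (h0 0).trans_le (hub 0)
  rw [← prod_const]
  refine prod_le_prod (fun k _ => div_nonneg (h0 k).le (by positivity)) fun k _ => ?_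
  rw [div_le_div_iff₀ (by positivity) hc]
  nlinarith [hub k]

theorem prod_rate_div_le_mul_pow {c : ℝ} (hc : 0 < c) {A : Finset ℕ} {k : ℕ} (hk : k ∈ A) :
    ∏ k ∈ A, lam k / (c * M) ≤ lam k / M * (1 / c) ^ #A := by
  have hM := (h0 0).trans_le (hub 0)
  rw [← mul_prod_erase A _ hk, ← card_erase_add_one hk, pow_succ']
  calc lam k / (c * M) * ∏ i ∈ A.erase k, lam i / (c * M)
      ≤ lam k / (c * M) * (1 / c) ^ #(A.erase k) :=
        mul_le_mul_of_nonneg_left (prod_rate_div_le_pow_card h0 hub hc _)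
          (div_nonneg (h0 k).le (by positivity))
    _ = lam k / M * (1 / c * (1 / c) ^ #(A.erase k)) := by
      field_simp

variable {R : ℝ} (hR : M < R)

include hR

theorem circleIntegrable_birthTailIntegrand (t : ℝ) (x m : ℕ) :
    CircleIntegrable (birthTailIntegrand lam t x m) 0 R :=
  ((differentiableOn_birthTailIntegrand h0 hub t x m).continuousOn.mono fun w hw => by
    simpa using hR.trans_le (le_norm_of_mem_sphere_abs hw)).circleIntegrable'

theorem circleAverage_mul_birthTailIntegrand_eq_start (t : ℝ) (x m : ℕ) :
    Real.circleAverage (fun w => w * birthTailIntegrand lam t x m w) 0 R =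
      lam x * (birthTail lam R t x m - birthTail lam R t (x + 1) m) := by
  have hintegrable := circleIntegrable_birthTailIntegrand h0 hub hR t
  simp only [birthTail]
  rw [← Real.circleAverage_fun_sub (hintegrable x m) (hintegrable (x + 1) m), ← smul_eq_mul,
    ← Real.circleAverage_fun_smul]
  refine Real.circleAverage_congr_sphere fun w _ => ?_
  have hx := rate_ne_zero h0 x
  simp only [birthTailIntegrand, pF, prod_range_succ, smul_eq_mul]
  field_simp
  ring

theorem circleAverage_mul_birthTailIntegrand_eq_height (t : ℝ) (x m : ℕ) :
    Real.circleAverage (fun w => w * birthTailIntegrand lam t x (m + 1) w) 0 R =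
      lam m * (birthTail lam R t x (m + 1) - birthTail lam R t x m) := by
  have hintegrable := circleIntegrable_birthTailIntegrand h0 hub hR t x
  simp only [birthTail]
  rw [← Real.circleAverage_fun_sub (hintegrable (m + 1)) (hintegrable m), ← smul_eq_mul,
    ← Real.circleAverage_fun_smul]
  refine Real.circleAverage_congr_sphere fun w hw => ?_
  have hm := rate_sub_ne_zero h0 hub (hR.trans_le (le_norm_of_mem_sphere_abs hw)) m
  simp only [birthTailIntegrand, prod_range_succ, smul_eq_mul]
  field_simp
  ring

theorem rate_mul_eL (t : ℝ) (x y : ℕ) :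
    lam y * eL lam R t x y =
      -Real.circleAverage (fun w => w * birthTailIntegrand lam t x (y + 1) w) 0 R := by
  have hR0 := ((h0 0).trans_le (hub 0)).trans hR
  have hy := rate_ne_zero h0 y
  rw [Real.circleAverage_eq_circleIntegral hR0.ne', eL, ← mul_assoc, mul_neg,
    mul_one_div_cancel hy, neg_one_mul, smul_eq_mul]
  refine congrArg (fun z => -(_ * z)) (circleIntegral.integral_congr hR0.le fun w hw => ?_)
  have hw0 : w ≠ 0 := ne_zero_of_mem_sphere hR0.ne' ⟨w, hw⟩
  simp only [sub_zero, smul_eq_mul, inv_mul_cancel_left₀ hw0, birthTailIntegrand, psiF]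

theorem eL_eq_birthTail_sub (t : ℝ) (x y : ℕ) :
    eL lam R t x y = birthTail lam R t x y - birthTail lam R t x (y + 1) := by
  refine mul_left_cancel₀ (rate_ne_zero h0 y) ?_
  rw [rate_mul_eL h0 hub hR, circleAverage_mul_birthTailIntegrand_eq_height h0 hub hR]
  ring

theorem rate_mul_birthTail_sub_succ (t : ℝ) (x y : ℕ) :
    lam x * (birthTail lam R t x (y + 1) - birthTail lam R t (x + 1) (y + 1)) =
      -(lam y * eL lam R t x y) := by
  rw [rate_mul_eL h0 hub hR, neg_neg, circleAverage_mul_birthTailIntegrand_eq_start h0 hub hR]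

theorem birthTail_of_le (t : ℝ) {x m : ℕ} (hmx : m ≤ x) : birthTail lam R t x m = 1 := by
  have hEq : Set.EqOn (birthTailIntegrand lam t x m)
      (fun w => (∏ k ∈ Ico m x, (lam k - w) / (lam k : ℂ)) * Complex.exp (-(t : ℂ) * w))
      (Metric.sphere 0 |R|) := fun w hw => by
    have hw' := rate_sub_ne_zero h0 hub (hR.trans_le (le_norm_of_mem_sphere_abs hw))
    rw [birthTailIntegrand, pF, prod_range_mul_prod_range_of_mul_eq_one (fun k => ?_) hmx]
    rw [div_mul_div_cancel₀ (hw' k), div_self (rate_ne_zero h0 k)]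
  rw [birthTail, Real.circleAverage_congr_sphere hEq,
    DiffContOnCl.circleAverage (Differentiable.diffContOnCl (by fun_prop))]
  simp [div_self (rate_ne_zero h0 _)]

theorem birthTail_eq_of_lt {R' : ℝ} (hR' : M < R') (t : ℝ) (x m : ℕ) :
    birthTail lam R t x m = birthTail lam R' t x m :=
  circleAverage_eq_of_differentiableOn_exterior ((h0 0).trans_le (hub 0)).le
    (differentiableOn_birthTailIntegrand h0 hub t x m) hR hR'

theorem birthTail_zero_of_lt {x m : ℕ} (hxm : x < m) : birthTail lam R 0 x m = 0 := by
  have hbound : ∀ r : ℝ, 0 < r → ‖birthTail lam R 0 x m‖ ≤ ∏ k ∈ Ico x m, lam k / r := by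
    intro r hr
    rw [birthTail_eq_of_lt h0 hub hR (lt_add_of_pos_right M hr)]
    refine norm_circleAverage_le_of_norm_le fun w hw => ?_
    have hw' := le_norm_of_mem_sphere_abs hw
    have hne := rate_sub_ne_zero h0 hub ((lt_add_of_pos_right M hr).trans_le hw')
    rw [birthTailIntegrand, pF, mul_comm (∏ k ∈ range m, _),
      prod_range_mul_prod_range_of_mul_eq_one (fun k => ?_) hxm.le]
    · simpa using norm_prod_rate_div_le h0 hub hr hw' (Ico x m)
    · rw [div_mul_div_cancel₀ (rate_ne_zero h0 k), div_self (hne k)]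
  have hlim : Tendsto (fun r : ℝ => ∏ k ∈ Ico x m, lam k / r) atTop (𝓝 0) := by
    rw [← prod_eq_zero (left_mem_Ico.2 hxm) (f := fun _ => (0 : ℝ)) rfl]
    exact tendsto_finsetProd _ fun k _ => tendsto_const_nhds.div_atTop tendsto_id
  exact norm_le_zero_iff.1 <|
    ge_of_tendsto hlim ((eventually_gt_atTop 0).mono fun r hr => hbound r hr)

theorem exists_norm_birthTail_le {r : ℝ} (hr : 0 < r) (t : ℝ) (x : ℕ) :
    ∃ K, 0 ≤ K ∧ ∀ m, ‖birthTail lam R t x m‖ ≤ K * ∏ k ∈ range m, lam k / r := by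
  have hcont : ContinuousOn (fun w => pF lam x w * Complex.exp (-(t : ℂ) * w))
      (Metric.sphere 0 |M + r|) := by
    unfold pF
    fun_prop
  obtain ⟨C, hC⟩ := (isCompact_sphere (0 : ℂ) |M + r|).exists_bound_of_continuousOn hcont
  refine ⟨|C|, abs_nonneg C, fun m => ?_⟩
  rw [birthTail_eq_of_lt h0 hub hR (lt_add_of_pos_right M hr)]
  refine norm_circleAverage_le_of_norm_le fun w hw => ?_
  rw [birthTailIntegrand, mul_assoc, norm_mul, mul_comm]
  exact mul_le_mul ((hC w hw).trans (le_abs_self C))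
    (norm_prod_rate_div_le h0 hub hr (le_norm_of_mem_sphere_abs hw) _) (norm_nonneg _)
    (abs_nonneg C)

theorem hasDerivAt_birthTail (t : ℝ) (x m : ℕ) :
    HasDerivAt (fun t => birthTail lam R t x m)
      (lam x * (birthTail lam R t (x + 1) m - birthTail lam R t x m)) t := by
  have hsub : ∀ w ∈ Metric.sphere (0 : ℂ) |R|, w ∈ {w : ℂ | M < ‖w - 0‖} := fun w hw => by
    simpa using hR.trans_le (le_norm_of_mem_sphere_abs hw)
  have hcont := fun t => (differentiableOn_birthTailIntegrand h0 hub t x m).continuousOn.mono hsub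
  have hsplit : ∀ t w, birthTailIntegrand lam t x m w =
      birthTailIntegrand lam 0 x m w * Complex.exp (-(t : ℂ) * w) := by
    simp [birthTailIntegrand]
  have hderiv : ∀ t : ℝ, ∀ w : ℂ, HasDerivAt (fun t => birthTailIntegrand lam t x m w)
      (birthTailIntegrand lam t x m w * -w) t := fun t w => by
    simp only [birthTailIntegrand, mul_assoc]
    refine HasDerivAt.const_mul _ (HasDerivAt.const_mul _ ?_)
    simpa using ((hasDerivAt_id t).ofReal_comp.neg.mul_const w).cexp
  have hcont' : ContinuousOn (Function.uncurry fun t w => birthTailIntegrand lam t x m w * -w)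
      (Set.univ ×ˢ Metric.sphere 0 |R|) := by
    refine ContinuousOn.congr (f := fun p : ℝ × ℂ => birthTailIntegrand lam 0 x m p.2 *
      Complex.exp (-(p.1 : ℂ) * p.2) * -p.2) ?_ fun p _ => by rw [Function.uncurry, hsplit]
    exact (((hcont 0).comp continuousOn_snd fun p hp => hp.2).mul (by fun_prop)).mul (by fun_prop)
  refine (hasDerivAt_circleAverage hcont hcont' (fun t w _ => hderiv t w) t).congr_deriv ?_
  have hstart := circleAverage_mul_birthTailIntegrand_eq_start h0 hub hR t x m
  have hneg : (fun w => birthTailIntegrand lam t x m w * -w) =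
      fun w => (-1 : ℂ) • (w * birthTailIntegrand lam t x m w) := by
    ext w
    rw [smul_eq_mul]
    ring
  rw [hneg, Real.circleAverage_fun_smul, hstart, smul_eq_mul]
  ring

theorem hasDerivAt_eL (t : ℝ) (x y : ℕ) :
    HasDerivAt (fun t => eL lam R t x y)
      (lam x * (eL lam R t (x + 1) y - eL lam R t x y)) t := by
  simp only [eL_eq_birthTail_sub h0 hub hR]
  exact ((hasDerivAt_birthTail h0 hub hR t x y).sub
    (hasDerivAt_birthTail h0 hub hR t x (y + 1))).congr_deriv (by ring)

theorem eL_of_lt (t : ℝ) {x y : ℕ} (hyx : y < x) : eL lam R t x y = 0 := by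
  rw [eL_eq_birthTail_sub h0 hub hR, birthTail_of_le h0 hub hR t hyx.le,
    birthTail_of_le h0 hub hR t hyx, sub_self]

theorem eL_zero (x y : ℕ) : eL lam R 0 x y = if x = y then 1 else 0 := by
  rcases lt_trichotomy x y with h | rfl | h
  · rw [if_neg h.ne, eL_eq_birthTail_sub h0 hub hR, birthTail_zero_of_lt h0 hub hR h,
      birthTail_zero_of_lt h0 hub hR (h.trans y.lt_succ_self), sub_self]
  · rw [if_pos rfl, eL_eq_birthTail_sub h0 hub hR, birthTail_of_le h0 hub hR 0 le_rfl,
      birthTail_zero_of_lt h0 hub hR x.lt_succ_self, sub_zero]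
  · rw [if_neg h.ne', eL_of_lt h0 hub hR 0 h]

-- Downward induction on the starting point: Kolmogorov's backward equation is driven by the
-- entry started one step higher.
theorem eL_nonneg {t : ℝ} (ht : 0 ≤ t) (x y : ℕ) : 0 ≤ eL lam R t x y := by
  rcases lt_or_ge (y + 1) x with hx | hx
  · rw [eL_of_lt h0 hub hR t (y.lt_succ_self.trans hx)]
  induction hx using Nat.decreasingInduction generalizing t with
  | self => rw [eL_of_lt h0 hub hR t y.lt_succ_self]
  | of_succ x _ ih =>
    refine nonneg_of_hasDerivAt_mul_sub (h0 x).le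
      (fun t _ => hasDerivAt_eL h0 hub hR t x y) (fun t ht => ih ht) ?_ ht
    rw [eL_zero h0 hub hR]
    split_ifs <;> simp

theorem summable_norm_birthTail (t : ℝ) (x : ℕ) : Summable fun m => ‖birthTail lam R t x m‖ := by
  have hM := (h0 0).trans_le (hub 0)
  obtain ⟨K, hK, hle⟩ := exists_norm_birthTail_le h0 hub hR (r := 2 * M) (by positivity) t x
  refine summable_norm_of_le_geometric (K := K) one_half_pos.le one_half_lt_one fun m =>
    (hle m).trans ?_
  gcongr
  simpa using prod_rate_div_le_pow_card h0 hub two_pos (range m)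

theorem hasSum_eL (t : ℝ) (x : ℕ) : HasSum (eL lam R t x) 1 := by
  have hT := hasSum_sub_succ (summable_norm_birthTail h0 hub hR t x).of_norm
  simp_rw [← eL_eq_birthTail_sub h0 hub hR] at hT
  rwa [birthTail_of_le h0 hub hR t (Nat.zero_le x)] at hT

theorem sum_range_eL (t : ℝ) (x m : ℕ) :
    ∑ z ∈ range m, eL lam R t x z = 1 - birthTail lam R t x m := by
  simp only [eL_eq_birthTail_sub h0 hub hR]
  rw [sum_range_sub', birthTail_of_le h0 hub hR t (Nat.zero_le x)]

end BirthChain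

section TwoLevel

variable {N : ℕ} {S : Type*}

/-- Positions in a two-level configuration: `N + 1` upper particles and `N` lower ones. -/
abbrev TwoLevel (N : ℕ) : Type := Fin (N + 1) ⊕ Fin N

/-- The value `1(k < i)` in position `i` of the upper block, and zero in the lower block. -/
def levelStep [Zero S] [One S] (k : Fin N) : TwoLevel N → S :=
  Sum.elim (fun i => if k.castSucc < i then 1 else 0) 0

/-- The increments `a - v 0, v 0 - v 1, …, v (N - 1) - 0`. -/
def boundaryDiff {G : Type*} [AddGroup G] (a : G) (v : Fin N → G) (j : Fin (N + 1)) : G :=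
  (Fin.cons a v : Fin (N + 1) → G) j - (Fin.snoc v 0 : Fin (N + 1) → G) j

/-- The matrix of the two-level kernel in terms of the vector `τ m` of upper tails at height `m`,
transposed and with the factors `1 / λ(y'_k)` removed: its rows are indexed by the final
configuration `(x', y')`. -/
def twoLevelMatrix [Ring S] (τ : ℕ → TwoLevel N → S) (y' : Fin N → ℕ)
    (x' : Fin (N + 1) → ℕ) : Matrix (TwoLevel N) (TwoLevel N) S :=
  Matrix.fromRows (Matrix.of fun j => τ (x' j) - τ (x' j + 1))
    (Matrix.of fun k => levelStep k - τ (y' k + 1))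

theorem boundaryDiff_sub {G : Type*} [AddCommGroup G] (a b : G) (u v : Fin N → G)
    (j : Fin (N + 1)) :
    boundaryDiff (a - b) (u - v) j = boundaryDiff a u j - boundaryDiff b v j := by
  have hcons : (Fin.cons (a - b) (u - v) : Fin (N + 1) → G) j =
      (Fin.cons a u : Fin (N + 1) → G) j - (Fin.cons b v : Fin (N + 1) → G) j := by
    cases j using Fin.cases <;> simp
  have hsnoc : (Fin.snoc (u - v) 0 : Fin (N + 1) → G) j =
      (Fin.snoc u 0 : Fin (N + 1) → G) j - (Fin.snoc v 0 : Fin (N + 1) → G) j := by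
    cases j using Fin.lastCases <;> simp
  rw [boundaryDiff, hcons, hsnoc, sub_sub_sub_comm]
  rfl

theorem boundaryDiff_zero_eq_sum [Ring S] {G : Type*} [AddCommGroup G] [Module S G]
    (v : Fin N → G) (j : Fin (N + 1)) :
    boundaryDiff 0 v j =
      ∑ k, ((if j = k.succ then 1 else 0 : S) - if j = k.castSucc then 1 else 0) • v k := by
  simp only [boundaryDiff, sub_smul, sum_sub_distrib, ite_smul, one_smul, zero_smul]
  congr 1
  · cases j using Fin.cases <;> simp [(Fin.succ_ne_zero _).symm]
  · cases j using Fin.lastCases <;> simp [(Fin.castSucc_ne_last _).symm]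

theorem boundaryDiff_levelStep [Ring S] (j : Fin (N + 1)) :
    boundaryDiff (Sum.elim 1 0 : TwoLevel N → S) levelStep j = Pi.single (Sum.inl j) 1 := by
  have hcons : (Fin.cons (Sum.elim 1 0 : TwoLevel N → S) levelStep :
      Fin (N + 1) → TwoLevel N → S) j =
      Sum.elim (fun i => if j ≤ i then 1 else 0) 0 := by
    cases j using Fin.cases
    · simp [Pi.one_def]
    · ext (i | i) <;> simp [levelStep, Fin.lt_def, Fin.le_def]
  have hsnoc : (Fin.snoc levelStep 0 : Fin (N + 1) → TwoLevel N → S) j =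
      Sum.elim (fun i => if j < i then 1 else 0) 0 := by
    cases j using Fin.lastCases
    · ext (i | i) <;> simp [Fin.le_last]
    · simp [levelStep]
  rw [boundaryDiff, hcons, hsnoc]
  ext (i | i)
  · rcases lt_trichotomy i j with h | rfl | h
    · simp [h.not_ge, h.not_gt, h.ne]
    · simp
    · simp [h, h.le, h.ne']
  · simp

-- Adding increments of the lower rows to the upper rows turns the left upper block into the
-- identity and clears the right one.
theorem det_fromRows_boundaryDiff [CommRing S] (σ : Fin N → TwoLevel N → S) :
    (Matrix.fromRows (Matrix.of (boundaryDiff (Sum.elim 1 0 : TwoLevel N → S) σ))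
      (Matrix.of (levelStep - σ))).det = (Matrix.of fun k i => -σ k (.inr i)).det := by
  let E : Matrix (Fin (N + 1)) (Fin N) S := Matrix.of fun j k =>
    (if j = k.succ then 1 else 0) - if j = k.castSucc then 1 else 0
  let L : Fin N → TwoLevel N → S := levelStep - σ
  have hinr : ∀ k i, L k (.inr i) = -σ k (.inr i) := by simp [L, levelStep]
  have hupper : ∀ j, boundaryDiff (Sum.elim 1 0 : TwoLevel N → S) σ j =
      Pi.single (Sum.inl j) 1 - ∑ k, E j k • L k := fun j => by
    have hcollapse : ∑ k, E j k • L k = boundaryDiff 0 L j := (boundaryDiff_zero_eq_sum L j).symm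
    rw [hcollapse, ← boundaryDiff_levelStep, ← boundaryDiff_sub, sub_zero, sub_sub_cancel]
  have hfactor : Matrix.fromRows (Matrix.of (boundaryDiff (Sum.elim 1 0 : TwoLevel N → S) σ))
      (Matrix.of L) =
      Matrix.fromBlocks 1 (-E) 0 1 * Matrix.fromBlocks 1 0 (Matrix.of fun k i => L k (.inl i))
        (Matrix.of fun k i => L k (.inr i)) := by
    rw [Matrix.fromBlocks_multiply]
    ext (j | k) (i | i)
    · simp [hupper, Matrix.mul_apply, Matrix.one_apply, Pi.single_apply, eq_comm, sub_eq_add_neg]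
    · simp [hupper, Matrix.mul_apply]
    · simp
    · simp
  rw [hfactor, Matrix.det_mul, Matrix.det_fromBlocks_zero₂₁, Matrix.det_fromBlocks_zero₁₂]
  simp [hinr]

theorem Interlace.strictMono {y : Fin N → ℕ} {x : Fin (N + 1) → ℕ} (h : Interlace y x) :
    StrictMono y := by
  cases N with
  | zero => exact fun i => i.elim0
  | succ n =>
    refine Fin.strictMono_iff_lt_succ.2 fun i => (h i.castSucc).2.trans_le ?_
    rw [Fin.succ_castSucc]
    exact (h i.succ).1

/-- The heights available to the upper particle `j` above a lower level `y`. -/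
def interlaceSet (y : Fin N → ℕ) (j : Fin (N + 1)) : Set ℕ :=
  (Fin.cons Set.univ (fun k => Set.Ioi (y k)) : Fin (N + 1) → Set ℕ) j \
    (Fin.snoc (fun k => Set.Ioi (y k)) ∅ : Fin (N + 1) → Set ℕ) j

theorem interlace_iff_mem_interlaceSet {y : Fin N → ℕ} {x : Fin (N + 1) → ℕ} :
    Interlace y x ↔ ∀ j, x j ∈ interlaceSet y j := by
  simp only [Interlace, interlaceSet, Set.mem_sdiff, forall_and, Fin.forall_fin_succ (n := N)
    (P := fun j => x j ∈ Fin.cons (α := fun _ => Set ℕ) _ _ j), Fin.forall_fin_succ' (n := N)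
    (P := fun j => x j ∉ Fin.snoc (α := fun _ => Set ℕ) _ _ j)]
  simp [and_comm]

theorem snoc_Ioi_subset_cons_Ioi {y : Fin N → ℕ} (hy : StrictMono y) (j : Fin (N + 1)) :
    (Fin.snoc (fun k => Set.Ioi (y k)) ∅ : Fin (N + 1) → Set ℕ) j ⊆
      (Fin.cons Set.univ (fun k => Set.Ioi (y k)) : Fin (N + 1) → Set ℕ) j := by
  cases j using Fin.lastCases with
  | last => simp
  | cast k =>
    cases N with
    | zero => exact k.elim0
    | succ N =>
      cases k using Fin.cases with
      | zero => simp
      | succ k =>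
        rw [← Fin.succ_castSucc, Fin.cons_succ, Fin.succ_castSucc, Fin.snoc_castSucc]
        exact Set.Ioi_subset_Ioi (hy k.castSucc_lt_succ).le

theorem hasSum_indicator_interlaceSet {G : Type*} [AddCommGroup G] [TopologicalSpace G]
    [IsTopologicalAddGroup G] {f : ℕ → G} (hf : Summable f) {y : Fin N → ℕ} (hy : StrictMono y)
    (j : Fin (N + 1)) :
    HasSum ((interlaceSet y j).indicator fun n => f n - f (n + 1))
      (boundaryDiff (f 0) (fun k => f (y k + 1)) j) := by
  rw [interlaceSet, Set.indicator_sdiff (snoc_Ioi_subset_cons_Ioi hy j)]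
  refine HasSum.sub ?_ ?_
  · cases j using Fin.cases with
    | zero => simpa using hasSum_sub_succ hf
    | succ k => simpa using hasSum_indicator_Ioi_sub_succ hf (y k)
  · cases j using Fin.lastCases with
    | last => simp
    | cast k => simpa using hasSum_indicator_Ioi_sub_succ hf (y k)

theorem indicator_interlace_det_twoLevelMatrix [CommRing S] (τ : ℕ → TwoLevel N → S)
    (y' : Fin N → ℕ) (x' : Fin (N + 1) → ℕ) :
    {x' | Interlace y' x'}.indicator (fun x' => (twoLevelMatrix τ y' x').det) x' =
      (Matrix.fromRows
        (Matrix.of fun j => (interlaceSet y' j).indicator (fun n => τ n - τ (n + 1)) (x' j))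
        (Matrix.of fun k => levelStep k - τ (y' k + 1))).det := by
  by_cases h : Interlace y' x'
  · have hmem := interlace_iff_mem_interlaceSet.1 h
    rw [Set.indicator_of_mem h]
    simp only [Set.indicator_of_mem (hmem _), twoLevelMatrix]
  · obtain ⟨j, hj⟩ := not_forall.1 (mt interlace_iff_mem_interlaceSet.2 h)
    rw [Set.indicator_of_notMem h, Matrix.det_eq_zero_of_row_eq_zero (Sum.inl j) fun i => ?_]
    simp [Set.indicator_of_notMem hj]

theorem hasSum_det_twoLevelMatrix {𝕜 : Type*} [NontriviallyNormedField 𝕜] [CompleteSpace 𝕜]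
    {τ : ℕ → TwoLevel N → 𝕜} (hτ₀ : τ 0 = (Sum.elim 1 0 : TwoLevel N → 𝕜))
    (hτ : Summable fun m => ‖τ m‖)
    {y' : Fin N → ℕ} (hy' : StrictMono y') :
    HasSum ({x' | Interlace y' x'}.indicator fun x' => (twoLevelMatrix τ y' x').det)
      (Matrix.of fun k i => -τ (y' k + 1) (.inr i)).det := by
  let lower : Fin N → TwoLevel N → 𝕜 := fun k => levelStep k - τ (y' k + 1)
  have hsum := hasSum_continuousMultilinearMap_apply_sumElim
    (detContinuousMultilinear 𝕜 (TwoLevel N)) (fun j => summable_norm_indicator_sub_succ hτ _)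
    (hasSum_indicator_interlaceSet hτ.of_norm hy') lower
  rw [hτ₀] at hsum
  rw [← det_fromRows_boundaryDiff, funext (indicator_interlace_det_twoLevelMatrix τ y')]
  exact hsum

theorem norm_det_twoLevelMatrix_le {𝕜 : Type*} [NontriviallyNormedField 𝕜]
    (τ : ℕ → TwoLevel N → 𝕜) (y' : Fin N → ℕ) (x' : Fin (N + 1) → ℕ) :
    ‖(twoLevelMatrix τ y' x').det‖ ≤ ‖detContinuousMultilinear 𝕜 (TwoLevel N)‖ *
      ((∏ j, ‖τ (x' j) - τ (x' j + 1)‖) * ∏ k, ‖levelStep k - τ (y' k + 1)‖) := by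
  have hbound := (detContinuousMultilinear 𝕜 (TwoLevel N)).le_opNorm (twoLevelMatrix τ y' x')
  rwa [Fintype.prod_sum_type] at hbound

theorem norm_levelStep_le {𝕜 : Type*} [NormedField 𝕜] (k : Fin N) :
    ‖(levelStep k : TwoLevel N → 𝕜)‖ ≤ 1 := by
  refine (pi_norm_le_iff_of_nonneg zero_le_one).2 ?_
  rintro (i | i) <;> simp only [levelStep, Sum.elim_inl, Sum.elim_inr]
  · split_ifs <;> simp
  · simp

-- Interlacing places a particle `x' (k + 1)` above `y' k`, whose increment of `τ` then carries a
-- decay that compensates the factor `u (y' k)`.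
theorem prod_norm_mul_prod_norm_sub_succ_le {E F : Type*} [SeminormedAddCommGroup E]
    [SeminormedAddCommGroup F] {τ : ℕ → E} {u : ℕ → F} {K q : ℝ} (hq₀ : 0 ≤ q) (hq₁ : q ≤ 1)
    (hτ : ∀ m, ‖τ m‖ ≤ K * q ^ m) (hτu : ∀ k m, k < m → ‖u k‖ * ‖τ m‖ ≤ K * q ^ k * q ^ m)
    {y' : Fin N → ℕ} {x' : Fin (N + 1) → ℕ} (h : Interlace y' x') :
    (∏ k, ‖u (y' k)‖) * ∏ j, ‖τ (x' j) - τ (x' j + 1)‖ ≤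
      (2 * K) ^ (N + 1) * ((∏ k, q ^ y' k) * ∏ j, q ^ x' j) := by
  have hK : 0 ≤ K := by simpa using (norm_nonneg _).trans (hτ 0)
  let Δ : Fin (N + 1) → ℝ := fun j => ‖τ (x' j) - τ (x' j + 1)‖
  have hΔ : Δ 0 ≤ 2 * K * q ^ x' 0 := by
    simpa only [one_mul] using mul_norm_sub_succ_le_of_mul_norm_le_pow zero_le_one
      hq₁ (fun m _ => (one_mul ‖τ m‖).trans_le (hτ m)) (Nat.zero_le (x' 0))
  have hΔu : ∀ k, ‖u (y' k)‖ * Δ k.succ ≤ 2 * (K * q ^ y' k) * q ^ x' k.succ :=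
    fun k => mul_norm_sub_succ_le_of_mul_norm_le_pow (norm_nonneg _) hq₁
      (fun m hm => hτu _ m hm) (h k).2
  calc (∏ k, ‖u (y' k)‖) * ∏ j, Δ j
      = Δ 0 * ∏ k, ‖u (y' k)‖ * Δ k.succ := by
        rw [Fin.prod_univ_succ, prod_mul_distrib, mul_left_comm]
    _ ≤ 2 * K * q ^ x' 0 * ∏ k, 2 * (K * q ^ y' k) * q ^ x' k.succ :=
        mul_le_mul hΔ (prod_le_prod (fun _ _ => by positivity) fun k _ => hΔu k)
          (prod_nonneg fun _ _ => by positivity) (by positivity)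
    _ = (2 * K) ^ (N + 1) * ((∏ k, q ^ y' k) * ∏ j, q ^ x' j) := by
        simp only [prod_mul_distrib, prod_const, card_univ, Fintype.card_fin,
          Fin.prod_univ_succ (fun j => q ^ x' j)]
        ring

theorem norm_prod_mul_det_twoLevelMatrix_le {𝕜 : Type*} [NontriviallyNormedField 𝕜]
    {τ : ℕ → TwoLevel N → 𝕜} {u : ℕ → 𝕜} {K q : ℝ} (hq₀ : 0 ≤ q) (hq₁ : q ≤ 1)
    (hτ : ∀ m, ‖τ m‖ ≤ K * q ^ m) (hτu : ∀ k m, k < m → ‖u k‖ * ‖τ m‖ ≤ K * q ^ k * q ^ m)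
    {y' : Fin N → ℕ} {x' : Fin (N + 1) → ℕ} (h : Interlace y' x') :
    ‖(∏ k, u (y' k)) * (twoLevelMatrix τ y' x').det‖ ≤
      ‖detContinuousMultilinear 𝕜 (TwoLevel N)‖ * (2 * K) ^ (N + 1) * (1 + K) ^ N *
        ((∏ k, q ^ y' k) * ∏ j, q ^ x' j) := by
  have hK : 0 ≤ K := by simpa using (norm_nonneg _).trans (hτ 0)
  let D := ‖detContinuousMultilinear 𝕜 (TwoLevel N)‖
  let ρ : Fin N → ℝ := fun k => ‖levelStep k - τ (y' k + 1)‖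
  have hρ : ∀ k, ρ k ≤ 1 + K := fun k => (norm_sub_le _ _).trans <|
    add_le_add (norm_levelStep_le k) <| (hτ _).trans <|
      mul_le_of_le_one_right hK (pow_le_one₀ hq₀ hq₁)
  calc ‖(∏ k, u (y' k)) * (twoLevelMatrix τ y' x').det‖
      ≤ (∏ k, ‖u (y' k)‖) * (D * ((∏ j, ‖τ (x' j) - τ (x' j + 1)‖) * ∏ k, ρ k)) := by
        rw [norm_mul, norm_prod]
        gcongr
        exact norm_det_twoLevelMatrix_le τ y' x'
    _ = D * ((∏ k, ‖u (y' k)‖) * ∏ j, ‖τ (x' j) - τ (x' j + 1)‖) * ∏ k, ρ k := by ring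
    _ ≤ D * ((2 * K) ^ (N + 1) * ((∏ k, q ^ y' k) * ∏ j, q ^ x' j)) * ∏ _k : Fin N, (1 + K) := by
        gcongr ?_ * ?_ * ?_
        · exact prod_norm_mul_prod_norm_sub_succ_le hq₀ hq₁ hτ hτu h
        · exact prod_le_prod (fun _ _ => norm_nonneg _) fun k _ => hρ k
    _ = D * (2 * K) ^ (N + 1) * (1 + K) ^ N * ((∏ k, q ^ y' k) * ∏ j, q ^ x' j) := by
        rw [prod_const, card_univ, Fintype.card_fin]
        ring

theorem summable_indicator_interlace_det_twoLevelMatrix {𝕜 : Type*} [NontriviallyNormedField 𝕜]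
    [CompleteSpace 𝕜] {τ : ℕ → TwoLevel N → 𝕜} {u : ℕ → 𝕜} {K q : ℝ} (hq₀ : 0 ≤ q) (hq₁ : q < 1)
    (hτ : ∀ m, ‖τ m‖ ≤ K * q ^ m) (hτu : ∀ k m, k < m → ‖u k‖ * ‖τ m‖ ≤ K * q ^ k * q ^ m) :
    Summable ({p : (Fin N → ℕ) × (Fin (N + 1) → ℕ) | Interlace p.1 p.2}.indicator fun p =>
      (∏ k, u (p.1 k)) * (twoLevelMatrix τ p.1 p.2).det) := by
  have hK : 0 ≤ K := by simpa using (norm_nonneg _).trans (hτ 0)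
  have hgeom : ∀ n, Summable fun z : Fin n → ℕ => ∏ i, q ^ z i := fun n =>
    summable_prod_pi (fun _ _ => by positivity) fun _ => summable_geometric_of_lt_one hq₀ hq₁
  have hpair := (hgeom N).mul_of_nonneg (hgeom (N + 1)) (fun _ => by positivity)
    fun _ => by positivity
  let C := ‖detContinuousMultilinear 𝕜 (TwoLevel N)‖ * (2 * K) ^ (N + 1) * (1 + K) ^ N
  refine .of_norm_bounded (hpair.mul_left C) fun p => ?_
  rw [norm_indicator_eq_indicator_norm]
  exact Set.indicator_le'
    (fun p hp => norm_prod_mul_det_twoLevelMatrix_le hq₀ hq₁.le hτ hτu hp)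
    (fun p _ => by positivity) p

end TwoLevel

section TwoLevelKernel

variable {N : ℕ} {lam : ℕ → ℝ} {M R : ℝ}

/-- The row vector of tails at height `m` attached to the initial configuration `(y, x)`: plain
tails for the upper particles, and rate-weighted differences of tails in the starting point for
the lower ones. -/
noncomputable def twoLevelTail (lam : ℕ → ℝ) (R t : ℝ) (y : Fin N → ℕ) (x : Fin (N + 1) → ℕ)
    (m : ℕ) : TwoLevel N → ℂ :=
  Sum.elim (fun i => birthTail lam R t (x i) m) fun i =>
    lam (y i) * (birthTail lam R t (y i) m - birthTail lam R t (y i + 1) m)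

variable (h0 : ∀ k, 0 < lam k) (hub : ∀ k, lam k ≤ M) (hR : M < R)

include h0 hub hR

theorem twoLevelTail_zero (t : ℝ) (y : Fin N → ℕ) (x : Fin (N + 1) → ℕ) :
    twoLevelTail lam R t y x 0 = (Sum.elim 1 0 : TwoLevel N → ℂ) := by
  ext (i | i) <;> simp [twoLevelTail, birthTail_of_le h0 hub hR]

theorem exists_norm_twoLevelTail_le {r : ℝ} (hr : 0 < r) (t : ℝ) (y : Fin N → ℕ)
    (x : Fin (N + 1) → ℕ) :
    ∃ K, 0 ≤ K ∧ ∀ m, ‖twoLevelTail lam R t y x m‖ ≤ K * ∏ k ∈ range m, lam k / r := by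
  choose K hK hle using exists_norm_birthTail_le h0 hub hR hr t
  let C : TwoLevel N → ℝ := Sum.elim (fun i => K (x i)) fun i =>
    lam (y i) * (K (y i) + K (y i + 1))
  have hC : ∀ a, 0 ≤ C a := by
    rintro (i | i)
    · exact hK _
    · exact mul_nonneg (h0 _).le (add_nonneg (hK _) (hK _))
  have hW : ∀ m, 0 ≤ ∏ k ∈ range m, lam k / r := fun m =>
    prod_nonneg fun k _ => div_nonneg (h0 k).le hr.le
  have hentry : ∀ m a, ‖twoLevelTail lam R t y x m a‖ ≤ C a * ∏ k ∈ range m, lam k / r := by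
    rintro m (i | i)
    · exact hle _ m
    · simp only [twoLevelTail, C, Sum.elim_inr, norm_mul, Complex.norm_real,
        Real.norm_of_nonneg (h0 (y i)).le, mul_assoc, add_mul]
      gcongr
      · exact (h0 _).le
      · exact (norm_sub_le _ _).trans (add_le_add (hle _ m) (hle _ m))
  refine ⟨∑ a, C a, sum_nonneg fun a _ => hC a, fun m =>
    (pi_norm_le_iff_of_nonneg (mul_nonneg (sum_nonneg fun a _ => hC a) (hW m))).2 fun a => ?_⟩
  exact (hentry m a).trans <| mul_le_mul_of_nonneg_right
    (single_le_sum (fun a _ => hC a) (mem_univ a)) (hW m)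

theorem Ut_eq_prod_mul_det_twoLevelMatrix (t : ℝ) (y : Fin N → ℕ) (x : Fin (N + 1) → ℕ)
    (y' : Fin N → ℕ) (x' : Fin (N + 1) → ℕ) :
    Ut lam R t N y x y' x' =
      (∏ k, (lam (y' k) : ℂ)⁻¹) * (twoLevelMatrix (twoLevelTail lam R t y x) y' x').det := by
  let v : TwoLevel N → ℂ := Sum.elim 1 fun k => (lam (y' k) : ℂ)⁻¹
  have hv : ∏ a, v a = ∏ k, (lam (y' k) : ℂ)⁻¹ := by simp [v]
  rw [Ut, ← Matrix.det_transpose, ← hv, ← Matrix.det_mul_column]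
  congr 1
  ext (j | k) (i | i)
  · simp [v, twoLevelMatrix, twoLevelTail, eL_eq_birthTail_sub h0 hub hR]
  · simp only [v, twoLevelMatrix, twoLevelTail, eL_eq_birthTail_sub h0 hub hR,
      Matrix.transpose_apply, Matrix.fromBlocks_apply₂₁, Matrix.of_apply,
      Matrix.fromRows_apply_inl, Pi.one_apply, Pi.sub_apply, Sum.elim_inl, Sum.elim_inr]
    ring
  · have hstep : (if k.castSucc < i then 1 else 0 : ℂ) = 1 - if (i : ℕ) ≤ k then 1 else 0 := by
      by_cases hik : (i : ℕ) ≤ k <;> simp [Fin.lt_def, hik]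
    simp only [v, twoLevelMatrix, twoLevelTail, levelStep, sum_range_eL h0 hub hR, hstep,
      one_div, Matrix.transpose_apply, Matrix.fromBlocks_apply₁₂, Matrix.of_apply,
      Matrix.fromRows_apply_inr, Pi.sub_apply, Sum.elim_inl, Sum.elim_inr]
    ring
  · simp [v, twoLevelMatrix, twoLevelTail, levelStep, rate_mul_birthTail_sub_succ h0 hub hR,
      rate_ne_zero h0]

theorem prod_mul_det_twoLevelTail (t : ℝ) (y y' : Fin N → ℕ) (x : Fin (N + 1) → ℕ) :
    (∏ k, (lam (y' k) : ℂ)⁻¹) *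
        (Matrix.of fun k i => -twoLevelTail lam R t y x (y' k + 1) (.inr i)).det =
      ((Matrix.of fun i => eL lam R t (y i)).submatrix id y').det := by
  rw [← Matrix.det_mul_column, ← Matrix.det_transpose]
  congr 1
  ext i k
  simp [twoLevelTail, rate_mul_birthTail_sub_succ h0 hub hR, rate_ne_zero h0]

theorem exists_norm_twoLevelTail_le_geometric (t : ℝ) (y : Fin N → ℕ) (x : Fin (N + 1) → ℕ) :
    ∃ K, (∀ m, ‖twoLevelTail lam R t y x m‖ ≤ K * (1 / 2) ^ m) ∧
      ∀ k m, k < m → ‖(lam k : ℂ)⁻¹‖ * ‖twoLevelTail lam R t y x m‖ ≤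
        K * (1 / 2) ^ k * (1 / 2) ^ m := by
  have hM := (h0 0).trans_le (hub 0)
  obtain ⟨K, hK, hle⟩ := exists_norm_twoLevelTail_le h0 hub hR (r := 4 * M) (by positivity) t y x
  refine ⟨K + K / M, fun m => ?_, fun k m hkm => ?_⟩
  · calc ‖twoLevelTail lam R t y x m‖ ≤ K * (1 / 4) ^ m := (hle m).trans <|
          mul_le_mul_of_nonneg_left
            ((prod_rate_div_le_pow_card h0 hub four_pos _).trans_eq (by rw [card_range])) hK
      _ ≤ (K + K / M) * (1 / 2) ^ m := by
          gcongr
          · exact le_add_of_nonneg_right (by positivity)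
          · norm_num
  · have hk := h0 k
    have hquarter : (1 / 4 : ℝ) ^ m = (1 / 2) ^ m * (1 / 2) ^ m := by rw [← mul_pow]; norm_num
    calc ‖(lam k : ℂ)⁻¹‖ * ‖twoLevelTail lam R t y x m‖
        ≤ (lam k)⁻¹ * (K * (lam k / M * (1 / 4) ^ m)) := by
          rw [norm_inv, Complex.norm_real, Real.norm_of_nonneg hk.le]
          gcongr
          refine (hle m).trans (mul_le_mul_of_nonneg_left ?_ hK)
          simpa only [card_range] using
            prod_rate_div_le_mul_pow h0 hub four_pos (mem_range.2 hkm)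
      _ = K / M * ((1 / 2) ^ m * (1 / 2) ^ m) := by
          rw [hquarter]
          field_simp
      _ ≤ (K + K / M) * (1 / 2) ^ k * (1 / 2) ^ m := by
          rw [← mul_assoc]
          gcongr ?_ * ?_ * _
          · exact le_add_of_nonneg_left hK
          · exact pow_le_pow_of_le_one (by norm_num) (by norm_num) hkm.le

theorem summable_indicator_interlace_Ut (t : ℝ) (y : Fin N → ℕ) (x : Fin (N + 1) → ℕ) :
    Summable ({p : (Fin N → ℕ) × (Fin (N + 1) → ℕ) | Interlace p.1 p.2}.indicator fun p =>
      Ut lam R t N y x p.1 p.2) := by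
  obtain ⟨K, hτ, hτrate⟩ := exists_norm_twoLevelTail_le_geometric h0 hub hR t y x
  simp only [Ut_eq_prod_mul_det_twoLevelMatrix h0 hub hR]
  exact summable_indicator_interlace_det_twoLevelMatrix (u := fun k => (lam k : ℂ)⁻¹)
    one_half_pos.le one_half_lt_one hτ hτrate

theorem hasSum_indicator_interlace_Ut (t : ℝ) (y : Fin N → ℕ) (x : Fin (N + 1) → ℕ)
    (y' : Fin N → ℕ) :
    HasSum ({x' | Interlace y' x'}.indicator fun x' => Ut lam R t N y x y' x')
      ({y' | StrictMono y'}.indicator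
        (fun y' => ((Matrix.of fun i => eL lam R t (y i)).submatrix id y').det) y') := by
  by_cases hy' : StrictMono y'
  · rw [Set.indicator_of_mem hy', ← prod_mul_det_twoLevelTail h0 hub hR t y y' x]
    obtain ⟨K, hτ, -⟩ := exists_norm_twoLevelTail_le_geometric h0 hub hR t y x
    have hU : {x' | Interlace y' x'}.indicator (fun x' => Ut lam R t N y x y' x') = fun x' =>
        (∏ k, (lam (y' k) : ℂ)⁻¹) * {x' | Interlace y' x'}.indicator
          (fun x' => (twoLevelMatrix (twoLevelTail lam R t y x) y' x').det) x' := by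
      simp only [← Set.indicator_const_mul, Ut_eq_prod_mul_det_twoLevelMatrix h0 hub hR]
    rw [hU]
    exact (hasSum_det_twoLevelMatrix (twoLevelTail_zero h0 hub hR t y x)
      (summable_norm_of_le_geometric one_half_pos.le one_half_lt_one hτ) hy').mul_left _
  · have hempty : {x' | Interlace y' x'} = ∅ :=
      Set.eq_empty_of_forall_notMem fun x' hx' => hy' hx'.strictMono
    rw [hempty, Set.indicator_empty, Set.indicator_of_notMem hy']
    exact hasSum_zero

theorem stmt_4_general {t : ℝ} (ht : 0 ≤ t) (y : Fin N → ℕ) (x : Fin (N + 1) → ℕ) :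
    ∃ S : ℂ,
      HasSum (fun p : { p : (Fin N → ℕ) × (Fin (N + 1) → ℕ) // Interlace p.1 p.2 } =>
        Ut lam R t N y x p.1.1 p.1.2) S ∧ S ≤ 1 := by
  obtain ⟨S, hS⟩ := summable_indicator_interlace_Ut h0 hub hR t y x
  have hsub := hasSum_subtype_iff_indicator.2 hS
  have hrows : ∀ i (A : Finset ℕ), ∑ z ∈ A, eL lam R t (y i) z ≤ 1 := fun i A =>
    sum_le_hasSum A (fun z _ => eL_nonneg h0 hub hR ht _ z) (hasSum_eL h0 hub hR t (y i))
  have hlower := hS.prod_fiberwise fun y' => hasSum_indicator_interlace_Ut h0 hub hR t y x y'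
  refine ⟨S, hsub, hasSum_le_of_sum_le hlower fun A => ?_⟩
  classical
  simp only [Set.indicator_apply, Set.mem_ofPred_eq]
  rw [← sum_filter]
  simpa using sum_det_submatrix_le_prod (P := Matrix.of fun i => eL lam R t (y i)) (c := 1)
    (fun i => eL_nonneg h0 hub hR ht (y i)) hrows fun y' hy' => (mem_filter.1 hy').2

end TwoLevelKernel

/-- for all t ≥ 0 and (y,x) ∈ W^{N,N+1}, the series
Σ_{(y',x') ∈ W^{N,N+1}} U_t^{N,N+1}[(y,x),(y',x')] converges and its value is at most 1
(in the complex order). -/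
theorem stmt_4 (lam : ℕ → ℝ) (s M : ℝ) (hs : 0 < s)
    (hlb : ∀ x, s ≤ lam x) (hub : ∀ x, lam x ≤ M)
    (R : ℝ) (hR : M < R) (N : ℕ) (hN : 1 ≤ N) (t : ℝ) (ht : 0 ≤ t)
    (y : Fin N → ℕ) (x : Fin (N + 1) → ℕ) (hyx : Interlace y x) :
    ∃ S : ℂ,
      HasSum (fun p : { p : (Fin N → ℕ) × (Fin (N + 1) → ℕ) // Interlace p.1 p.2 } =>
        Ut lam R t N y x p.1.1 p.1.2) S ∧ S ≤ 1 := by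
  exact stmt_4_general (fun k => hs.trans_le (hlb k)) hub hR ht y x
end

section
/- Let λ : ℤ₊ → ℝ satisfy (UB) and let N ≥ 1. For all t ≥ 0, x ∈ W^{N+1} and (y',x') ∈ W^{N,N+1}: det( e^{tL}(x_i, x'_j) )_{i,j=1}^{N+1} · ∏_{i=1}^N λ(y'_i)^{−1} · 1(y' ≺ x') = Σ_{y ∈ ℤ₊^N : y ≺ x} ∏_{i=1}^N λ(y_i)^{−1} · U_t^{N,N+1}[(y,x),(y',x')]. (Equivalently, P_t^{N+1} Λ_N^{N+1} = Λ_N^{N+1} U_t^{N,N+1} as positive kernels from W^{N+1} to W^{N,N+1}.) -/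
open Complex MeasureTheory Finset
open scoped Real ComplexOrder

/-!
Consider the row `g(a) = (e^{tL}(a, x'_j), λ(y'_j)⁻¹ Σ_{z ≤ y'_j} e^{tL}(a, z))`. The upper rows of
the matrix of `U_t^{N,N+1}` are `g(x_i)` minus a step function, while the duality
`λ(a)⁻¹ e^{tL}(a, n) = λ(n)⁻¹ Σ_{z ≤ n} (e^{tL}(a, z) - e^{tL}(a + 1, z))` says that `λ(a)⁻¹` times
the lower row at `a` is `g(a) - g(a + 1)`. By multilinearity the sum over the interlacing `y` may be
taken row by row, where it telescopes to `g(x_i) - g(x_{i+1})`. These are the differences of the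
upper rows up to the differences of the step functions, which form a diagonal matrix, so the
determinant factors. The duality itself follows from
`λ(z) (ψ_z - ψ_{z-1}) p_a = w ψ_z p_a = λ(a) ψ_z (p_a - p_{a+1})` and Cauchy's theorem.
-/

section Determinants

variable {K m n : Type*} [CommRing K] [Fintype m] [Fintype n] [DecidableEq m] [DecidableEq n]

lemma sum_piFinset_prod_mul_det_fromRows {α : Type*} (U : Matrix m (m ⊕ n) K)
    (s : n → Finset α) (c : n → α → K) (v : n → α → m ⊕ n → K) :
    ∑ y ∈ Fintype.piFinset s,
        (∏ i, c i (y i)) * (Matrix.fromRows U (Matrix.of fun i => v i (y i))).det =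
      (Matrix.fromRows U (Matrix.of fun i => ∑ a ∈ s i, c i a • v i a)).det := by
  let detLower : MultilinearMap K (fun _ : n => m ⊕ n → K) K :=
    Matrix.detRowAlternating.toMultilinearMap.currySum U
  have det_eq (V : n → m ⊕ n → K) :
      (Matrix.fromRows U (Matrix.of V)).det = detLower V := rfl
  simp only [det_eq, detLower.map_sum_finset, detLower.map_smul_univ, smul_eq_mul]

lemma det_fromBlocks_sub_mul_of_mul_eq_one (A : Matrix m m K) (B T : Matrix m n K)
    (L : Matrix n m K) (D : Matrix n n K) (hLT : L * T = 1) :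
    (Matrix.fromBlocks A (B - T * D) (L * A) (L * B)).det = A.det * D.det := by
  have factorization : Matrix.fromBlocks A (B - T * D) (L * A) (L * B) =
      Matrix.fromBlocks 1 0 L 1 * Matrix.fromBlocks A (B - T * D) 0 D := by
    simp [Matrix.fromBlocks_multiply, Matrix.mul_sub, ← Matrix.mul_assoc, hLT]
  simp [factorization]

end Determinants

section Differences

variable {R : Type*} [Ring R] {N : ℕ}

/-- The matrix of the operator taking a sequence `u_0, …, u_N` to the differences
`u_i - u_{i+1}`. -/
def differenceMatrix (R : Type*) [Ring R] (N : ℕ) : Matrix (Fin N) (Fin (N + 1)) R :=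
  Matrix.of fun i => Pi.single i.castSucc 1 - Pi.single i.succ 1

/-- The matrix of the indicators `1(j ≥ i)` in the block `B` of `U_t^{N,N+1}`; its `j`-th column is
the indicator of the initial segment `{0, …, j}`. -/
def initialSegmentMatrix (R : Type*) [Ring R] (N : ℕ) : Matrix (Fin (N + 1)) (Fin N) R :=
  Matrix.of fun i j => if (i : ℕ) ≤ j then 1 else 0

lemma differenceMatrix_mul_apply {ι : Type*} (P : Matrix (Fin (N + 1)) ι R) (i : Fin N) (j : ι) :
    (differenceMatrix R N * P) i j = P i.castSucc j - P i.succ j := by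
  simp [differenceMatrix, Matrix.mul_apply, Pi.single_apply, sub_mul, Finset.sum_sub_distrib]

lemma differenceMatrix_mul_initialSegmentMatrix :
    differenceMatrix R N * initialSegmentMatrix R N = 1 := by
  ext i j
  rw [differenceMatrix_mul_apply]
  simp only [initialSegmentMatrix, Matrix.of_apply, Fin.val_castSucc, Fin.val_succ,
    Nat.succ_le_iff, Fin.val_fin_le, Fin.val_fin_lt, Matrix.one_apply]
  rcases lt_trichotomy i j with h | rfl | h
  · simp [h.le, h, h.ne]
  · simp
  · simp [h.not_ge, h.not_gt, h.ne']

lemma sum_Ico_sub_succ {E : Type*} [AddCommGroup E] (g : ℕ → E) {a b : ℕ} (hab : a ≤ b) :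
    ∑ k ∈ Finset.Ico a b, (g k - g (k + 1)) = g a - g b := by
  simpa only [Pi.neg_apply, neg_sub_neg] using Finset.sum_Ico_sub (-g) hab

end Differences

section Kernels

variable {K : Type*} [Field K] {N : ℕ}

/-- The block `B` of the matrix of `U_t^{N,N+1}` without its indicator term, for a weight `c` in
place of `λ` and a kernel `G` in place of `e^{tL}`. -/
def cumulativeMatrix {m n : Type*} (c : ℕ → K) (G : ℕ → ℕ → K) (x : m → ℕ) (y : n → ℕ) :
    Matrix m n K :=
  Matrix.of fun i j => (c (y j))⁻¹ * ∑ z ∈ Finset.range (y j + 1), G (x i) z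

/-- The rows `[A, B]` of the matrix of `U_t^{N,N+1}`, for a weight `c` in place of `λ` and a kernel
`G` in place of `e^{tL}`. -/
def upperRows (c : ℕ → K) (G : ℕ → ℕ → K) (x : Fin (N + 1) → ℕ) (y' : Fin N → ℕ)
    (x' : Fin (N + 1) → ℕ) : Matrix (Fin (N + 1)) (Fin (N + 1) ⊕ Fin N) K :=
  Matrix.fromCols (Matrix.of fun i j => G (x i) (x' j))
    (cumulativeMatrix c G x y' -
      initialSegmentMatrix K N * Matrix.diagonal fun j => (c (y' j))⁻¹)

/-- The row of `[C, D]` in the matrix of `U_t^{N,N+1}` that belongs to a particle at `a`, for a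
weight `c` in place of `λ` and a kernel `G` in place of `e^{tL}`. -/
def lowerRow (c : ℕ → K) (G : ℕ → ℕ → K) (y' : Fin N → ℕ) (x' : Fin (N + 1) → ℕ) (a : ℕ) :
    Fin (N + 1) ⊕ Fin N → K :=
  Sum.elim (fun j => c a * (G a (x' j) - G (a + 1) (x' j))) fun j => G a (y' j)

lemma sum_Ico_inv_smul_lowerRow {c : ℕ → K} {G : ℕ → ℕ → K} (hc : ∀ k, c k ≠ 0)
    (hG : ∀ a n, (c a)⁻¹ * G a n =
      (c n)⁻¹ * ∑ z ∈ Finset.range (n + 1), (G a z - G (a + 1) z))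
    {x : Fin (N + 1) → ℕ} (hx : Monotone x) (y' : Fin N → ℕ) (x' : Fin (N + 1) → ℕ) :
    (Matrix.of fun i : Fin N =>
        ∑ a ∈ Finset.Ico (x i.castSucc) (x i.succ), (c a)⁻¹ • lowerRow c G y' x' a) =
      Matrix.fromCols (differenceMatrix K N * Matrix.of fun i j => G (x i) (x' j))
        (differenceMatrix K N * cumulativeMatrix c G x y') := by
  have hi (i : Fin N) : x i.castSucc ≤ x i.succ := hx i.castSucc_lt_succ.le
  ext i (j | j)
  · simp [lowerRow, differenceMatrix_mul_apply, inv_mul_cancel_left₀ (hc _),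
      sum_Ico_sub_succ (fun a => G a (x' j)) (hi i)]
  · simp [lowerRow, differenceMatrix_mul_apply, cumulativeMatrix, hG, Finset.sum_sub_distrib,
      mul_sub, sum_Ico_sub_succ
        (fun a => (c (y' j))⁻¹ * ∑ z ∈ Finset.range (y' j + 1), G a z) (hi i)]

theorem sum_prod_inv_mul_det_fromRows_lowerRow {c : ℕ → K} {G : ℕ → ℕ → K}
    (hc : ∀ k, c k ≠ 0)
    (hG : ∀ a n, (c a)⁻¹ * G a n =
      (c n)⁻¹ * ∑ z ∈ Finset.range (n + 1), (G a z - G (a + 1) z))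
    {x : Fin (N + 1) → ℕ} (hx : Monotone x) (y' : Fin N → ℕ) (x' : Fin (N + 1) → ℕ) :
    ∑ y ∈ Fintype.piFinset fun i : Fin N => Finset.Ico (x i.castSucc) (x i.succ),
        (∏ i, (c (y i))⁻¹) * (Matrix.fromRows (upperRows c G x y' x')
          (Matrix.of fun i => lowerRow c G y' x' (y i))).det =
      (Matrix.of fun i j => G (x i) (x' j)).det * ∏ i, (c (y' i))⁻¹ := by
  rw [sum_piFinset_prod_mul_det_fromRows (upperRows c G x y' x') _ (fun _ a => (c a)⁻¹)
    (fun _ => lowerRow c G y' x'), sum_Ico_inv_smul_lowerRow hc hG hx, upperRows,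
    Matrix.fromRows_fromCols_eq_fromBlocks,
    det_fromBlocks_sub_mul_of_mul_eq_one _ _ _ _ _ differenceMatrix_mul_initialSegmentMatrix,
    Matrix.det_diagonal]

end Kernels

section ContourIntegrals

variable {lam : ℕ → ℝ} {R : ℝ}

lemma pF_sub_pF_succ {a : ℕ} (ha : lam a ≠ 0) (w : ℂ) :
    pF lam a w - pF lam (a + 1) w = w / lam a * pF lam a w := by
  have ha' : (lam a : ℂ) ≠ 0 := mod_cast ha
  simp only [pF, Finset.prod_range_succ]
  field_simp
  ring

lemma sum_range_div_mul_psiF (h0 : ∀ k, lam k ≠ 0) {w : ℂ} (hw : ∀ k, (lam k : ℂ) - w ≠ 0)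
    (n : ℕ) : ∑ z ∈ Finset.range (n + 1), w / lam z * psiF lam z w = psiF lam n w - 1 := by
  let P (n : ℕ) : ℂ := ∏ k ∈ Finset.range n, (lam k : ℂ) / (lam k - w)
  have P_succ_sub (z : ℕ) : w / lam z * psiF lam z w = P (z + 1) - P z := by
    have hz : (lam z : ℂ) ≠ 0 := mod_cast h0 z
    have hzw := hw z
    simp only [P, psiF, Finset.prod_range_succ]
    field_simp
    ring
  simp only [P_succ_sub, Finset.sum_range_sub]
  simp [P, psiF]

lemma ofReal_sub_ne_zero_of_mem_sphere {a : ℝ} (ha : |a| < R) {w : ℂ}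
    (hw : w ∈ Metric.sphere (0 : ℂ) R) : (a : ℂ) - w ≠ 0 := by
  rw [mem_sphere_zero_iff_norm] at hw
  intro h
  rw [← sub_eq_zero.mp h, Complex.norm_real] at hw
  exact ha.ne hw

lemma differentiable_pF_mul_exp (lam : ℕ → ℝ) (t : ℝ) (a : ℕ) :
    Differentiable ℂ fun w => pF lam a w * Complex.exp (-(t : ℂ) * w) := by
  unfold pF
  fun_prop

lemma circleIntegrable_psiF_mul (hR : ∀ k, |lam k| < R) {f : ℂ → ℂ} (hf : Continuous f) (n : ℕ) :
    CircleIntegrable (fun w => psiF lam n w * f w) 0 R := by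
  refine ContinuousOn.circleIntegrable ((abs_nonneg _).trans_lt (hR 0)).le ?_
  refine ContinuousOn.mul (continuousOn_finsetProd _ fun k _ => ?_) hf.continuousOn
  exact continuousOn_const.div (by fun_prop) fun w hw =>
    ofReal_sub_ne_zero_of_mem_sphere (hR k) hw

lemma sum_circleIntegral_div_mul_psiF_mul (h0 : ∀ k, lam k ≠ 0) (hR : ∀ k, |lam k| < R)
    {f : ℂ → ℂ} (hf : Differentiable ℂ f) (n : ℕ) :
    ∑ z ∈ Finset.range (n + 1), ∮ w in C(0, R), w / lam z * (psiF lam z w * f w) =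
      ∮ w in C(0, R), psiF lam n w * f w := by
  have R_nonneg : 0 ≤ R := ((abs_nonneg _).trans_lt (hR 0)).le
  have integrable_summand (z : ℕ) :
      CircleIntegrable (fun w => w / lam z * (psiF lam z w * f w)) 0 R := by
    simpa only [mul_left_comm] using circleIntegrable_psiF_mul hR
      (f := fun w => w / lam z * f w) ((continuous_id.div_const _).mul hf.continuous) z
  have cauchy : ∮ w in C(0, R), f w = 0 :=
    hf.diffContOnCl.circleIntegral_eq_zero R_nonneg
  calc ∑ z ∈ Finset.range (n + 1), ∮ w in C(0, R), w / lam z * (psiF lam z w * f w)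
      = ∮ w in C(0, R), ∑ z ∈ Finset.range (n + 1), w / lam z * (psiF lam z w * f w) :=
        (circleIntegral.integral_fun_sum fun z _ => integrable_summand z).symm
    _ = ∮ w in C(0, R), (psiF lam n w * f w - f w) := by
        refine circleIntegral.integral_congr R_nonneg fun w hw => ?_
        have telescoped := sum_range_div_mul_psiF h0
          (fun k => ofReal_sub_ne_zero_of_mem_sphere (hR k) hw) n
        simp only [← mul_assoc, ← Finset.sum_mul, telescoped, sub_mul, one_mul]
    _ = ∮ w in C(0, R), psiF lam n w * f w := by
        rw [circleIntegral.integral_sub (circleIntegrable_psiF_mul hR hf.continuous n)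
          (hf.continuous.continuousOn.circleIntegrable R_nonneg), cauchy, sub_zero]

lemma eL_sub_eL_succ (h0 : ∀ k, lam k ≠ 0) (hR : ∀ k, |lam k| < R) (t : ℝ) (a z : ℕ) :
    eL lam R t a z - eL lam R t (a + 1) z =
      -(1 / (lam a : ℂ)) * ((2 * (Real.pi : ℂ) * Complex.I)⁻¹ *
        ∮ w in C(0, R), w / lam z *
          (psiF lam z w * (pF lam a w * Complex.exp (-(t : ℂ) * w)))) := by
  have integrable (b : ℕ) := circleIntegrable_psiF_mul hR
    (differentiable_pF_mul_exp lam t b).continuous z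
  simp only [eL, ← mul_sub, mul_assoc]
  rw [← circleIntegral.integral_sub (integrable a) (integrable (a + 1))]
  simp only [← mul_assoc, ← circleIntegral.integral_const_mul]
  congr 1
  funext w
  linear_combination -(1 / (lam z : ℂ)) * (2 * (Real.pi : ℂ) * Complex.I)⁻¹ * psiF lam z w *
    Complex.exp (-(t : ℂ) * w) * pF_sub_pF_succ (h0 a) w

lemma inv_mul_eL (h0 : ∀ k, lam k ≠ 0) (hR : ∀ k, |lam k| < R) (t : ℝ) (a n : ℕ) :
    (lam a : ℂ)⁻¹ * eL lam R t a n = (lam n : ℂ)⁻¹ *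
      ∑ z ∈ Finset.range (n + 1), (eL lam R t a z - eL lam R t (a + 1) z) := by
  simp only [eL_sub_eL_succ h0 hR, ← Finset.mul_sum]
  rw [sum_circleIntegral_div_mul_psiF_mul h0 hR (differentiable_pF_mul_exp lam t a), eL]
  simp only [mul_assoc]
  ring

end ContourIntegrals

lemma Ut_eq_det_fromRows (lam : ℕ → ℝ) (R t : ℝ) (N : ℕ) (y : Fin N → ℕ) (x : Fin (N + 1) → ℕ)
    (y' : Fin N → ℕ) (x' : Fin (N + 1) → ℕ) :
    Ut lam R t N y x y' x' =
      (Matrix.fromRows (upperRows (fun k => (lam k : ℂ)) (eL lam R t) x y' x')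
        (Matrix.of fun i => lowerRow (fun k => (lam k : ℂ)) (eL lam R t) y' x' (y i))).det := by
  rw [Ut, ← Matrix.fromRows_fromCols_eq_fromBlocks]
  congr 2
  ext i (j | j)
  · rfl
  · simp [upperRows, cumulativeMatrix, initialSegmentMatrix, mul_sub]

lemma mem_piFinset_Ico_iff_interlace {N : ℕ} {y : Fin N → ℕ} {x : Fin (N + 1) → ℕ} :
    y ∈ Fintype.piFinset (fun i : Fin N => Finset.Ico (x i.castSucc) (x i.succ)) ↔
      Interlace y x := by
  simp [Interlace]

lemma hasSum_subtype_of_mem_iff {α M : Type*} [AddCommMonoid M] [TopologicalSpace M] (f : α → M)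
    {s : Finset α} {p : α → Prop} (hs : ∀ a, a ∈ s ↔ p a) :
    HasSum (fun a : { a // p a } => f a) (∑ a ∈ s, f a) :=
  (Equiv.subtypeEquivRight hs).hasSum_iff.mp (s.hasSum f)

theorem stmt_6_general {lam : ℕ → ℝ} {R : ℝ} (h0 : ∀ k, lam k ≠ 0) (hR : ∀ k, |lam k| < R)
    (t : ℝ) {N : ℕ} {x : Fin (N + 1) → ℕ} (hx : Monotone x) (y' : Fin N → ℕ)
    (x' : Fin (N + 1) → ℕ) :
    HasSum (fun y : { y : Fin N → ℕ // Interlace y x } =>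
        ((∏ i, (lam (y.1 i))⁻¹ : ℝ) : ℂ) * Ut lam R t N y.1 x y' x')
      ((Matrix.of fun i j => eL lam R t (x i) (x' j)).det *
        ((∏ i, (lam (y' i))⁻¹ : ℝ) : ℂ)) := by
  have hc (k : ℕ) : (lam k : ℂ) ≠ 0 := mod_cast h0 k
  have sum_eq := sum_prod_inv_mul_det_fromRows_lowerRow hc (inv_mul_eL h0 hR t) hx y' x'
  simp only [← Ut_eq_det_fromRows, ← Complex.ofReal_inv, ← Complex.ofReal_prod] at sum_eq
  rw [← sum_eq]
  exact hasSum_subtype_of_mem_iff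
    (fun y : Fin N → ℕ => ((∏ i, (lam (y i))⁻¹ : ℝ) : ℂ) * Ut lam R t N y x y' x')
    fun _ => mem_piFinset_Ico_iff_interlace

/-- the intertwining P_t^{N+1} Λ_N^{N+1} = Λ_N^{N+1} U_t^{N,N+1}:
for all t ≥ 0, x ∈ W^{N+1} and (y',x') ∈ W^{N,N+1},
det(e^{tL}(x_i,x'_j)) ∏ λ(y'_i)⁻¹ 1(y'≺x') = Σ_{y ≺ x} ∏ λ(y_i)⁻¹ U_t^{N,N+1}[(y,x),(y',x')]. -/
theorem stmt_6 (lam : ℕ → ℝ) (s M : ℝ) (hs : 0 < s)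
    (hlb : ∀ x, s ≤ lam x) (hub : ∀ x, lam x ≤ M)
    (R : ℝ) (hR : M < R) (N : ℕ) (hN : 1 ≤ N) (t : ℝ) (ht : 0 ≤ t)
    (x : Fin (N + 1) → ℕ) (hx : StrictMono x)
    (y' : Fin N → ℕ) (x' : Fin (N + 1) → ℕ) (hy'x' : Interlace y' x') :
    HasSum (fun y : { y : Fin N → ℕ // Interlace y x } =>
        ((∏ i, (lam (y.1 i))⁻¹ : ℝ) : ℂ) * Ut lam R t N y.1 x y' x')
      ((Matrix.of fun i j => eL lam R t (x i) (x' j)).det *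
        ((∏ i, (lam (y' i))⁻¹ : ℝ) : ℂ) * (if Interlace y' x' then 1 else 0)) := by
  have hpos (k : ℕ) : 0 < lam k := hs.trans_le (hlb k)
  have habs (k : ℕ) : |lam k| < R := (abs_of_pos (hpos k)).trans_lt ((hub k).trans_lt hR)
  simpa [hy'x'] using stmt_6_general (fun k => (hpos k).ne') habs t hx.monotone y' x'
end
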